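/- arXiv:2603.29380 — 4 statements merged into one kernel-verified Lean document; each statement's English description precedes it below -/
import Mathlib

section
/- Let N be a natural number, let P : ℝ → Matrix (Fin N) (Fin N) ℝ and π : ℝ → (Fin N → ℝ) be differentiable at a point θ₀ ∈ ℝ, and suppose that for every θ ∈ ℝ the row vector π(θ) satisfies the stationarity relation π(θ) ᵥ* P(θ) = π(θ) and the normalization ∑ i, π(θ) i = 1. Let Z be the inverse of the matrix A := 1 − P(θ₀) + (Matrix.vecMulVec (fun _ => (1:ℝ)) (π θ₀)) (i.e., A = I − P(θ₀) + 𝟙 π(θ₀)ᵀ), and assume A is invertible (IsUnit A.det). Then the derivative of π at θ₀, viewed as a row vector, satisfies deriv π θ₀ = (π θ₀) ᵥ* (deriv P θ₀) * Z, where deriv P θ₀ is the entrywise derivative of P at θ₀. -/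
open Matrix

/-- Derivative of the stationary distribution of a parameterized Markov chain:
if `π θ ᵥ* P θ = π θ` and `∑ i, π θ i = 1` for all `θ`, and
`A = I − P θ₀ + 𝟙 π(θ₀)ᵀ` is invertible with inverse `Z = A⁻¹`, then
`deriv π θ₀ = (π θ₀) ᵥ* (deriv P θ₀) * Z`, where `deriv P θ₀` is the
entrywise derivative of `P` at `θ₀`. -/
theorem deriv_stationary_distribution
    (N : ℕ) (P : ℝ → Matrix (Fin N) (Fin N) ℝ) (π : ℝ → (Fin N → ℝ)) (θ₀ : ℝ)
    (hP : ∀ i j, DifferentiableAt ℝ (fun θ => P θ i j) θ₀)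
    (hπ : DifferentiableAt ℝ π θ₀)
    (hstat : ∀ θ, (π θ) ᵥ* (P θ) = π θ)
    (hnorm : ∀ θ, ∑ i, π θ i = 1)
    (A : Matrix (Fin N) (Fin N) ℝ)
    (hA : A = 1 - P θ₀ + Matrix.vecMulVec (fun _ => (1 : ℝ)) (π θ₀))
    (hAunit : IsUnit A.det) :
    deriv π θ₀ =
      (π θ₀) ᵥ* ((Matrix.of fun i j => deriv (fun θ => P θ i j) θ₀) * A⁻¹) := by
  have hcoord : ∀ i, HasDerivAt (fun θ => π θ i) (deriv π θ₀ i) θ₀ :=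
    hasDerivAt_pi.1 hπ.hasDerivAt
  have hsum : ∑ i, deriv π θ₀ i = 0 := by
    have h := HasDerivAt.fun_sum (u := Finset.univ) fun i _ => hcoord i
    simp only [hnorm] at h
    exact h.unique (hasDerivAt_const θ₀ (1 : ℝ))
  have hderiv : deriv π θ₀ = deriv π θ₀ ᵥ* P θ₀ +
      π θ₀ ᵥ* (Matrix.of fun i j => deriv (fun θ => P θ i j) θ₀) := by
    funext j
    have h := HasDerivAt.fun_sum (u := Finset.univ)
      fun i _ => (hcoord i).fun_mul (hP i j).hasDerivAt
    have hentry : (fun θ => ∑ i, π θ i * P θ i j) = fun θ => π θ j :=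
      funext fun θ => congrFun (hstat θ) j
    rw [hentry] at h
    rw [(hcoord j).unique h, Finset.sum_add_distrib]
    rfl
  have hrank : deriv π θ₀ ᵥ* vecMulVec (fun _ => (1 : ℝ)) (π θ₀) = 0 := by
    funext j
    simp [vecMul, dotProduct, vecMulVec_apply, ← Finset.sum_mul, hsum]
  have hmul : deriv π θ₀ ᵥ* A =
      π θ₀ ᵥ* (Matrix.of fun i j => deriv (fun θ => P θ i j) θ₀) := by
    rw [hA, vecMul_add, vecMul_sub, vecMul_one, hrank, add_zero, sub_eq_iff_eq_add']
    exact hderiv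
  rw [← vecMul_vecMul, ← hmul, vecMul_vecMul, mul_nonsing_inv A hAunit, vecMul_one]
end

section
/- Let N be a natural number, let P : ℝ → Matrix (Fin N) (Fin N) ℝ, π : ℝ → (Fin N → ℝ), and h : ℝ → (Fin N → ℝ) all be differentiable at a point θ₀ ∈ ℝ, and suppose that for every θ ∈ ℝ the row vector π(θ) satisfies π(θ) ᵥ* P(θ) = π(θ) and ∑ i, π(θ) i = 1. Let Z be the inverse of the matrix A := 1 − P(θ₀) + Matrix.vecMulVec (fun _ => (1:ℝ)) (π θ₀), assumed invertible (IsUnit A.det). Define J : ℝ → ℝ by J(θ) = (π θ) ⬝ᵥ (h θ). Then J is differentiable at θ₀ and deriv J θ₀ = ((π θ₀) ᵥ* (deriv P θ₀) * Z) ⬝ᵥ (h θ₀) + (π θ₀) ⬝ᵥ (deriv h θ₀). -/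
open Matrix

theorem HasDerivAt.dotProduct {ι : Type*} [Fintype ι] {u v : ℝ → ι → ℝ} {u' v' : ι → ℝ} {t : ℝ}
    (hu : HasDerivAt u u' t) (hv : HasDerivAt v v' t) :
    HasDerivAt (fun s => u s ⬝ᵥ v s) (u' ⬝ᵥ v t + u t ⬝ᵥ v') t := by
  have key := HasDerivAt.fun_sum (u := Finset.univ) fun i _ =>
    (hasDerivAt_pi.1 hu i).fun_mul (hasDerivAt_pi.1 hv i)
  simpa only [_root_.dotProduct, Finset.sum_add_distrib] using key

/-- Differentiating the stationarity equation `π P = π`. -/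
theorem hasDerivAt_stationary_eq {ι : Type*} [Fintype ι] {P : ℝ → Matrix ι ι ℝ}
    {P' : Matrix ι ι ℝ} {p : ℝ → ι → ℝ} {p' : ι → ℝ} {t : ℝ}
    (hP : ∀ i j, HasDerivAt (fun s => P s i j) (P' i j) t) (hp : HasDerivAt p p' t)
    (hstat : ∀ s, p s ᵥ* P s = p s) :
    p' = p' ᵥ* P t + p t ᵥ* P' := by
  funext j
  have hcol : HasDerivAt (fun s i => P s i j) (fun i => P' i j) t :=
    hasDerivAt_pi.2 fun i => hP i j
  have hj : HasDerivAt (fun s => p s j) (p' ⬝ᵥ (fun i => P t i j) + p t ⬝ᵥ fun i => P' i j) t :=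
    (hp.dotProduct hcol).congr_of_eventuallyEq
      (.of_forall fun s => (congrFun (hstat s) j).symm)
  exact (hasDerivAt_pi.1 hp j).unique hj

/-- The derivative of a vector of constant total mass has total mass zero. -/
theorem HasDerivAt.sum_eq_zero_of_sum_eq_const {ι : Type*} [Fintype ι] {p : ℝ → ι → ℝ} {p' : ι → ℝ}
    {t c : ℝ} (hp : HasDerivAt p p' t) (hsum : ∀ s, ∑ i, p s i = c) :
    ∑ i, p' i = 0 := by
  have hs := HasDerivAt.fun_sum (u := Finset.univ) fun i _ => hasDerivAt_pi.1 hp i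
  simp only [hsum] at hs
  exact hs.unique (hasDerivAt_const t c)

/-- Derivative of the long-run average cost `J θ = π θ ⬝ᵥ h θ` of a parameterized
Markov chain: `J` is differentiable at `θ₀`, and
`deriv J θ₀ = ((π θ₀) ᵥ* (deriv P θ₀) * Z) ⬝ᵥ h θ₀ + (π θ₀) ⬝ᵥ deriv h θ₀`,
where `Z = A⁻¹` with `A = I − P θ₀ + 𝟙 π(θ₀)ᵀ` invertible. -/
theorem deriv_long_run_average_cost
    (N : ℕ) (P : ℝ → Matrix (Fin N) (Fin N) ℝ) (π : ℝ → (Fin N → ℝ))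
    (h : ℝ → (Fin N → ℝ)) (θ₀ : ℝ)
    (hP : ∀ i j, DifferentiableAt ℝ (fun θ => P θ i j) θ₀)
    (hπ : DifferentiableAt ℝ π θ₀)
    (hh : DifferentiableAt ℝ h θ₀)
    (hstat : ∀ θ, (π θ) ᵥ* (P θ) = π θ)
    (hnorm : ∀ θ, ∑ i, π θ i = 1)
    (A : Matrix (Fin N) (Fin N) ℝ)
    (hA : A = 1 - P θ₀ + Matrix.vecMulVec (fun _ => (1 : ℝ)) (π θ₀))
    (hAunit : IsUnit A.det)
    (J : ℝ → ℝ) (hJ : ∀ θ, J θ = (π θ) ⬝ᵥ (h θ)) :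
    DifferentiableAt ℝ J θ₀ ∧
      deriv J θ₀ =
        ((π θ₀) ᵥ* ((Matrix.of fun i j => deriv (fun θ => P θ i j) θ₀) * A⁻¹)) ⬝ᵥ (h θ₀)
          + (π θ₀) ⬝ᵥ (deriv h θ₀) := by
  set P' : Matrix (Fin N) (Fin N) ℝ := Matrix.of fun i j => deriv (fun θ => P θ i j) θ₀
  have hstat' : deriv π θ₀ = deriv π θ₀ ᵥ* P θ₀ + π θ₀ ᵥ* P' :=
    hasDerivAt_stationary_eq (fun i j => (hP i j).hasDerivAt) hπ.hasDerivAt hstat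
  have hmass : deriv π θ₀ ⬝ᵥ (fun _ => (1 : ℝ)) = 0 := by
    simpa [dotProduct] using hπ.hasDerivAt.sum_eq_zero_of_sum_eq_const hnorm
  have hmul : deriv π θ₀ ᵥ* A = π θ₀ ᵥ* P' := by
    rw [hA, vecMul_add, vecMul_sub, vecMul_one, vecMul_vecMulVec, hmass, zero_smul, add_zero]
    exact sub_eq_iff_eq_add'.2 hstat'
  have hderiv : π θ₀ ᵥ* (P' * A⁻¹) = deriv π θ₀ := by
    rw [← vecMul_vecMul, ← hmul, vecMul_vecMul, mul_nonsing_inv A hAunit, vecMul_one]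
  obtain rfl : J = fun θ => π θ ⬝ᵥ h θ := funext hJ
  have hJ' := hπ.hasDerivAt.dotProduct hh.hasDerivAt
  exact ⟨hJ'.differentiableAt, by rw [hderiv, hJ'.deriv]⟩
end

section
/- Let E be a real inner product space, let J : E → ℝ be differentiable with gradient g := gradient J, and suppose g is L-Lipschitz: ‖g x − g y‖ ≤ L*‖x − y‖ for all x, y. Let θ ∈ E, let M, M⋆ : E →L[ℝ] E be continuous linear maps, let z ∈ E, let a > 0 and λ_c > 0, and assume ⟪x, M⋆ x⟫ ≥ λ_c*‖x‖² for all x ∈ E. Set θ' := θ − a • (M z). Then a*λ_c*‖g θ‖² ≤ (J θ − J θ') − a*⟪g θ, (M − M⋆) z⟫ − a*⟪g θ, M⋆ (z − g θ)⟫ + (L/2)*a²*‖M z‖². -/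
open scoped RealInnerProductSpace

/-- The descent lemma: a differentiable function with `L`-Lipschitz gradient is bounded above by
its first-order expansion plus `(L / 2) ‖v‖ ^ 2`. -/
theorem le_add_inner_gradient_add_of_lipschitz_gradient
    {E : Type*} [NormedAddCommGroup E] [InnerProductSpace ℝ E] [CompleteSpace E]
    {J : E → ℝ} (hJ : Differentiable ℝ J) {L : ℝ}
    (hLip : ∀ x y : E, ‖gradient J x - gradient J y‖ ≤ L * ‖x - y‖) (x v : E) :
    J (x + v) ≤ J x + ⟪gradient J x, v⟫ + L / 2 * ‖v‖ ^ 2 := by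
  have hline (t : ℝ) : HasDerivAt (fun s : ℝ => J (x + s • v)) ⟪gradient J (x + t • v), v⟫ t := by
    have hv : HasDerivAt (fun s : ℝ => x + s • v) v t := by
      simpa using ((hasDerivAt_id t).smul_const v).const_add x
    exact (hJ (x + t • v)).hasGradientAt.hasFDerivAt.comp_hasDerivAt t hv
  have hquad (t : ℝ) :
      HasDerivAt (fun s : ℝ => J x + s * ⟪gradient J x, v⟫ + L / 2 * ‖v‖ ^ 2 * s ^ 2)
        (⟪gradient J x, v⟫ + L * ‖v‖ ^ 2 * t) t := by
    refine ((((hasDerivAt_id t).mul_const ⟪gradient J x, v⟫).const_add (J x)).add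
      ((hasDerivAt_pow 2 t).const_mul (L / 2 * ‖v‖ ^ 2))).congr_deriv ?_
    push_cast
    ring
  have hbound : ∀ t ∈ Set.Ico (0 : ℝ) 1,
      ⟪gradient J (x + t • v), v⟫ ≤ ⟪gradient J x, v⟫ + L * ‖v‖ ^ 2 * t := by
    intro t ht
    have hnorm : ‖gradient J (x + t • v) - gradient J x‖ ≤ L * (t * ‖v‖) := by
      simpa [norm_smul, abs_of_nonneg ht.1] using hLip (x + t • v) x
    have hinner := real_inner_le_norm (gradient J (x + t • v) - gradient J x) v
    rw [inner_sub_left] at hinner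
    linarith [mul_le_mul_of_nonneg_right hnorm (norm_nonneg v)]
  have h := image_le_of_deriv_right_le_deriv_boundary
    (fun t _ => (hline t).continuousAt.continuousWithinAt)
    (fun t _ => (hline t).hasDerivWithinAt) (by simp)
    (fun t _ => (hquad t).continuousAt.continuousWithinAt)
    (fun t _ => (hquad t).hasDerivWithinAt) hbound (Set.right_mem_Icc.2 zero_le_one)
  simpa using h

/-- Per-iteration descent inequality for the damped Newton step of NSF1:
if `∇J` is `L`-Lipschitz, `M⋆` is positive definite with smallest eigenvalue
at least `λ_c`, and `θ' = θ − a • (M z)`, then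
`a λ_c ‖∇J(θ)‖² ≤ (J θ − J θ') − a⟪∇J θ, (M−M⋆)z⟫ − a⟪∇J θ, M⋆(z−∇J θ)⟫ + (L/2)a²‖Mz‖²`. -/
theorem nsf1_descent_inequality
    (E : Type*) [NormedAddCommGroup E] [InnerProductSpace ℝ E] [CompleteSpace E]
    (J : E → ℝ) (hJ : Differentiable ℝ J) (L : ℝ)
    (hLip : ∀ x y : E, ‖gradient J x - gradient J y‖ ≤ L * ‖x - y‖)
    (θ : E) (M Mstar : E →L[ℝ] E) (z : E) (a lc : ℝ)
    (ha : 0 < a) (hlc : 0 < lc)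
    (hPD : ∀ x : E, ⟪x, Mstar x⟫ ≥ lc * ‖x‖ ^ 2) :
    a * lc * ‖gradient J θ‖ ^ 2 ≤
      (J θ - J (θ - a • (M z)))
        - a * ⟪gradient J θ, (M - Mstar) z⟫
        - a * ⟪gradient J θ, Mstar (z - gradient J θ)⟫
        + (L / 2) * a ^ 2 * ‖M z‖ ^ 2 := by
  have hdescent := le_add_inner_gradient_add_of_lipschitz_gradient hJ hLip θ (-(a • M z))
  rw [← sub_eq_add_neg, inner_neg_right, real_inner_smul_right, norm_neg, norm_smul, mul_pow,
    Real.norm_eq_abs, sq_abs] at hdescent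
  have hcoercive := mul_le_mul_of_nonneg_left (hPD (gradient J θ)) ha.le
  rw [sub_apply, map_sub, inner_sub_right, inner_sub_right]
  linarith
end

section
/- For all real numbers ν, α, σ with 0 < ν < α < σ < 1, min (1−σ) (min ν (2*(σ−α))) < 2/5; moreover, for every δ > 0 there exist real ν, α, σ with 0 < ν < α < σ < 1 and min (1−σ) (min ν (2*(σ−α))) > 2/5 − δ. Hence the best achievable finite-time rate exponent of the NSF1 bound min(1−σ, ν, 2(σ−α)) has supremum 2/5 over admissible three-time-scale step-size exponents, approached as ν → 2/5, α → ν, σ → 3/5. -/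
/-- Optimal NSF1 rate exponent: over admissible three-time-scale step-size
exponents `0 < ν < α < σ < 1`, the rate exponent `min(1−σ, ν, 2(σ−α))` is
always strictly below `2/5`, but comes within any `δ > 0` of `2/5`
(approached as `ν → 2/5`, `α → ν`, `σ → 3/5`). -/
theorem nsf1_optimal_rate_exponent :
    (∀ ν α σ : ℝ, 0 < ν → ν < α → α < σ → σ < 1 →
      min (1 - σ) (min ν (2 * (σ - α))) < 2 / 5) ∧
    (∀ δ : ℝ, 0 < δ → ∃ ν α σ : ℝ, 0 < ν ∧ ν < α ∧ α < σ ∧ σ < 1 ∧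
      min (1 - σ) (min ν (2 * (σ - α))) > 2 / 5 - δ) := by
  refine ⟨fun ν α σ _ hνα _ _ => ?_, fun δ hδ => ?_⟩
  · by_contra! h
    obtain ⟨hσ, hν, hσα⟩ := by simpa only [le_min_iff] using h
    linarith
  · obtain ⟨ε, hε, hεδ⟩ := exists_between (lt_min hδ (by norm_num : (0 : ℝ) < 2 / 5))
    obtain ⟨hεδ, hε'⟩ := lt_min_iff.mp hεδ
    refine ⟨2 / 5 - ε, 2 / 5 - ε / 2, 3 / 5, by linarith, by linarith, by linarith,
      by norm_num, lt_min ?_ (lt_min ?_ ?_)⟩ <;> linarith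
end
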